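/- For all positive integers i and k it holds that W_{i,k} = F_{k+1} ⌊φi⌋ + F_k (i−1); moreover w_+(i) = φ⌊φi⌋ + i − 1 and w_−(i) = φ^{−1}{φi} − 1, where {x} denotes the fractional part of x. -/

import Mathlib

open Real

noncomputable def phi : ℝ := (1 + Real.sqrt 5) / 2

noncomputable def W (i : ℕ) : ℕ → ℤ
  | 0 => ⌊phi ^ 2 * (⌊phi * i⌋ : ℝ)⌋ - ⌊phi * (⌊phi * i⌋ : ℝ)⌋
  | 1 => ⌊phi * (⌊phi * i⌋ : ℝ)⌋
  | 2 => ⌊phi ^ 2 * (⌊phi * i⌋ : ℝ)⌋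
  | (k + 3) => W i (k + 2) + W i (k + 1)

noncomputable def wplus (i : ℕ) : ℝ := phi⁻¹ ^ 2 * (W i 1 : ℝ) + phi⁻¹ * (W i 2 : ℝ)

noncomputable def wminus (i : ℕ) : ℝ := phi ^ 2 * (W i 1 : ℝ) - phi * (W i 2 : ℝ)

noncomputable def eta (i : ℕ) : ℝ := -(wplus i * wminus i)

theorem phi_sq_aux : phi ^ 2 = phi + 1 := by
  unfold phi
  have h : Real.sqrt 5 ^ 2 = 5 := Real.sq_sqrt (by norm_num)
  linear_combination h / 4

theorem phi_gt_aux : 1 < phi := by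
  exact Real.one_lt_goldenRatio

theorem phi_lt_aux : phi < 2 := by
  exact Real.goldenRatio_lt_two

theorem phi_inv_aux : phi⁻¹ = phi - 1 := by
  have := phi_gt_aux
  have h2 := phi_sq_aux
  apply inv_eq_of_mul_eq_one_right
  linear_combination h2

theorem phi_irr_aux : Irrational phi := Real.goldenRatio_irrational

theorem W_one_aux (i : ℕ) (hi : 0 < i) : W i 1 = ⌊phi * (i : ℝ)⌋ + (i : ℤ) - 1 := by
  have h1 := phi_gt_aux
  have h2 := phi_lt_aux
  have hs := phi_sq_aux
  have hirr : Irrational (phi * (i : ℝ)) := phi_irr_aux.mul_natCast hi.ne'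
  have hle := Int.floor_le (phi * (i : ℝ))
  have hlt := Int.lt_floor_add_one (phi * (i : ℝ))
  have hne : phi * (i : ℝ) ≠ (⌊phi * (i : ℝ)⌋ : ℝ) := hirr.ne_int _
  simp only [W]
  generalize ⌊phi * (i : ℝ)⌋ = n at *
  have hf : 0 < phi * i - n := sub_pos.mpr (lt_of_le_of_ne hle hne.symm)
  have e : phi * n = n + i - (phi * i - n) * (phi - 1) := by
    linear_combination (i : ℝ) * hs
  have p1 : 0 < (phi * i - n) * (phi - 1) := mul_pos hf (by linarith)
  have p2 : (phi * i - n) * (phi - 1) < 1 := by nlinarith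
  rw [Int.floor_eq_iff]
  push_cast
  constructor <;> linarith

theorem W_two_aux (i : ℕ) (hi : 0 < i) : W i 2 = 2 * ⌊phi * (i : ℝ)⌋ + (i : ℤ) - 1 := by
  have h := W_one_aux i hi
  simp only [W] at h ⊢
  rw [phi_sq_aux, add_mul, one_mul, Int.floor_add_intCast, h]
  ring

/-- `W_{i,k} = F_{k+1}⌊φi⌋ + F_k(i−1)`, with `w₊(i) = φ⌊φi⌋ + i − 1` and
`w₋(i) = φ⁻¹{φi} − 1`. -/
theorem wythoff_fib_formula (i : ℕ) (hi : 0 < i) :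
    (∀ k : ℕ, 0 < k →
        W i k = (Nat.fib (k + 1) : ℤ) * ⌊phi * (i : ℝ)⌋ + (Nat.fib k : ℤ) * ((i : ℤ) - 1)) ∧
      wplus i = phi * (⌊phi * (i : ℝ)⌋ : ℝ) + (i : ℝ) - 1 ∧
      wminus i = phi⁻¹ * Int.fract (phi * (i : ℝ)) - 1 := by
  have w1 := W_one_aux i hi
  have w2 := W_two_aux i hi
  have hs := phi_sq_aux
  refine ⟨?_, ?_, ?_⟩
  · have key : ∀ k : ℕ,
        W i (k + 1) = (Nat.fib (k + 2) : ℤ) * ⌊phi * (i : ℝ)⌋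
          + (Nat.fib (k + 1) : ℤ) * ((i : ℤ) - 1) ∧
        W i (k + 2) = (Nat.fib (k + 3) : ℤ) * ⌊phi * (i : ℝ)⌋
          + (Nat.fib (k + 2) : ℤ) * ((i : ℤ) - 1) := by
      intro k
      induction k with
      | zero =>
        have f3 : Nat.fib 3 = 2 := by decide
        simp only [zero_add, w1, w2, f3, Nat.fib_one, Nat.fib_two]
        constructor <;> push_cast <;> ring
      | succ k ih =>
        refine ⟨ih.2, ?_⟩
        have e : W i (k + 1 + 2) = W i (k + 2) + W i (k + 1) := by
          show W i (k + 3) = _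
          rw [W]
        have f4 : Nat.fib (k + 1 + 3) = Nat.fib (k + 2) + Nat.fib (k + 3) := Nat.fib_add_two
        have f3 : Nat.fib (k + 1 + 2) = Nat.fib (k + 1) + Nat.fib (k + 2) := Nat.fib_add_two
        rw [e, ih.1, ih.2, f4, f3]
        push_cast
        ring
    intro k hk
    obtain ⟨m, rfl⟩ : ∃ m, k = m + 1 := ⟨k - 1, by omega⟩
    exact (key m).1
  · rw [wplus, w1, w2, phi_inv_aux]
    push_cast
    linear_combination ((⌊phi * (i : ℝ)⌋ : ℝ) + i - 1) * hs
  · rw [wminus, w1, w2, phi_inv_aux, Int.fract]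
    push_cast
    linear_combination ((⌊phi * (i : ℝ)⌋ : ℝ) - 1) * hs
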